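/- Let n ≥ 1 and let d be a divisor of n. Then ∑_{k|n} c_d(n/k)·μ(k) equals n if d = n, and equals 0 otherwise. -/

import Mathlib

/-- The Ramanujan sum `c_d(r)`: the sum of the `r`-th powers of all primitive
`d`-th roots of unity. -/
noncomputable def ramanujanSum (d r : ℕ) : ℂ :=
  ∑ m ∈ (Finset.range d).filter (fun m => Nat.gcd m d = 1),
    Complex.exp (2 * Real.pi * Complex.I * ((m : ℂ) * (r : ℂ) / (d : ℂ)))

/-!
Summing `c_e(r)` over `e ∣ d` gives the sum of the `r`-th powers of all `d`-th roots of unity,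
which is `d` or `0` according to whether `d ∣ r`. Möbius inversion in `d` turns this into
`c_d(r) = ∑ e μ(d/e)` over the common divisors `e` of `d` and `r`, so `r ↦ c_d(r)` is a divisor sum
of a function supported on the divisors of `d`. Möbius inversion in `r` recovers that function.
-/

open ArithmeticFunction Finset Polynomial

section RootsOfUnity

variable {R : Type*} [CommRing R] [IsDomain R]

lemma sum_nthRootsFinset_mul_left {M : Type*} [AddCommMonoid M] {w : R} {n : ℕ}
    (hw : w ∈ nthRootsFinset n (1 : R)) (f : R → M) :
    ∑ z ∈ nthRootsFinset n (1 : R), f (w * z) = ∑ z ∈ nthRootsFinset n (1 : R), f z := by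
  have hmem : Set.MapsTo (w * ·) (nthRootsFinset n (1 : R) : Set R) (nthRootsFinset n (1 : R)) :=
    fun z hz ↦ by simpa using mul_mem_nthRootsFinset hw hz
  have hinj : Set.InjOn (w * ·) (nthRootsFinset n (1 : R) : Set R) :=
    (mul_right_injective₀ (ne_zero_of_mem_nthRootsFinset one_ne_zero hw)).injOn
  exact sum_nbij (w * ·) hmem hinj (surjOn_of_injOn_of_card_le _ hmem hinj le_rfl) fun _ _ ↦ rfl

lemma sum_nthRootsFinset_pow {ζ : R} {n : ℕ} (hζ : IsPrimitiveRoot ζ n) (r : ℕ) :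
    ∑ z ∈ nthRootsFinset n (1 : R), z ^ r = if n ∣ r then (n : R) else 0 := by
  rcases n.eq_zero_or_pos with rfl | hn
  · simp
  split_ifs with hr
  · obtain ⟨m, rfl⟩ := hr
    have hpow : ∀ z ∈ nthRootsFinset n (1 : R), z ^ (n * m) = 1 := fun z hz ↦ by
      rw [pow_mul, (mem_nthRootsFinset hn 1).1 hz, one_pow]
    rw [sum_congr rfl hpow, sum_const, hζ.card_nthRootsFinset, nsmul_one]
  · have hne : ζ ^ r ≠ 1 := mt (hζ.pow_eq_one_iff_dvd r).1 hr
    have hinv : ζ ^ r * ∑ z ∈ nthRootsFinset n (1 : R), z ^ r =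
        ∑ z ∈ nthRootsFinset n (1 : R), z ^ r := by
      simpa only [mul_pow, ← mul_sum] using
        sum_nthRootsFinset_mul_left (hζ.mem_nthRootsFinset hn) (· ^ r)
    exact (mul_left_eq_self₀.1 hinv).resolve_left hne

lemma sum_divisors_sum_primitiveRoots {M : Type*} [AddCommMonoid M] (n : ℕ) (f : R → M) :
    ∑ d ∈ n.divisors, ∑ z ∈ primitiveRoots d R, f z = ∑ z ∈ nthRootsFinset n (1 : R), f z := by
  classical
  rw [IsPrimitiveRoot.nthRoots_one_eq_biUnion_primitiveRoots,
    sum_biUnion fun _ _ _ _ hne ↦ IsPrimitiveRoot.disjoint hne]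

lemma sum_primitiveRoots_eq_sum_coprime {M : Type*} [AddCommMonoid M] {ζ : R} {n : ℕ}
    (hζ : IsPrimitiveRoot ζ n) (f : R → M) :
    ∑ z ∈ primitiveRoots n R, f z = ∑ m ∈ range n with m.Coprime n, f (ζ ^ m) := by
  rcases n.eq_zero_or_pos with rfl | hn
  · simp
  have : NeZero n := ⟨hn.ne'⟩
  symm
  refine sum_nbij (ζ ^ ·) (fun m hm ↦ ?_) (fun a ha b hb hab ↦ ?_) (fun z hz ↦ ?_) fun _ _ ↦ rfl
  · exact (mem_primitiveRoots hn).2 (hζ.pow_of_coprime m (mem_filter.1 hm).2)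
  · exact hζ.pow_inj (mem_range.1 (mem_filter.1 ha).1) (mem_range.1 (mem_filter.1 hb).1) hab
  · have hz := (mem_primitiveRoots hn).1 hz
    obtain ⟨m, hm, rfl⟩ := hζ.eq_pow_of_pow_eq_one hz.pow_eq_one
    exact ⟨m, mem_filter.2 ⟨mem_range.2 hm, (hζ.pow_iff_coprime hn m).1 hz⟩, rfl⟩

end RootsOfUnity

lemma ramanujanSum_eq_sum_primitiveRoots (d r : ℕ) :
    ramanujanSum d r = ∑ z ∈ primitiveRoots d ℂ, z ^ r := by
  rcases eq_or_ne d 0 with rfl | hd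
  · simp [ramanujanSum]
  rw [sum_primitiveRoots_eq_sum_coprime (Complex.isPrimitiveRoot_exp d hd)]
  refine sum_congr rfl fun m _ ↦ ?_
  rw [← pow_mul, ← Complex.exp_nat_mul]
  push_cast
  ring_nf

lemma sum_divisors_ramanujanSum {d : ℕ} (hd : 0 < d) (r : ℕ) :
    ∑ e ∈ d.divisors, ramanujanSum e r = if d ∣ r then (d : ℂ) else 0 := by
  simp only [ramanujanSum_eq_sum_primitiveRoots]
  rw [sum_divisors_sum_primitiveRoots,
    sum_nthRootsFinset_pow (Complex.isPrimitiveRoot_exp d hd.ne')]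

lemma ramanujanSum_eq_sum_divisors_filter {d r : ℕ} (hd : 0 < d) :
    ramanujanSum d r = ∑ e ∈ d.divisors with e ∣ r, (e : ℂ) * moebius (d / e) := by
  rw [← sum_eq_iff_sum_mul_moebius_eq.1 (fun e he ↦ sum_divisors_ramanujanSum he r) d hd,
    Nat.sum_divisorsAntidiagonal'
      fun a b ↦ (moebius a : ℂ) * if b ∣ r then (b : ℂ) else 0, sum_filter]
  refine sum_congr rfl fun e _ ↦ ?_
  rw [mul_ite, mul_zero, mul_comm]

theorem stmt_7_general {n d : ℕ} (hn : 0 < n) (hd : 0 < d) :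
    ∑ k ∈ n.divisors, ramanujanSum d (n / k) * (moebius k : ℂ) =
      if n ∣ d then (n : ℂ) * moebius (d / n) else 0 := by
  have hsum : ∀ r > 0, ∑ e ∈ r.divisors, (if e ∣ d then (e : ℂ) * moebius (d / e) else 0) =
      ramanujanSum d r := by
    intro r hr
    rw [ramanujanSum_eq_sum_divisors_filter hd, ← sum_filter]
    have hcommon : {e ∈ r.divisors | e ∣ d} = {e ∈ d.divisors | e ∣ r} := by
      ext e
      simp [hr.ne', hd.ne', and_comm]
    rw [hcommon]
  rw [← sum_eq_iff_sum_mul_moebius_eq.1 hsum n hn,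
    Nat.sum_divisorsAntidiagonal fun a b ↦ (moebius a : ℂ) * ramanujanSum d b]
  exact sum_congr rfl fun k _ ↦ mul_comm _ _

theorem stmt_7 (n : ℕ) (hn : 1 ≤ n) (d : ℕ) (hd : d ∣ n) :
    ∑ k ∈ n.divisors, ramanujanSum d (n / k) * (ArithmeticFunction.moebius k : ℂ) =
      if d = n then (n : ℂ) else 0 := by
  rw [stmt_7_general hn (Nat.pos_of_dvd_of_pos hd hn)]
  rcases eq_or_ne d n with rfl | hdn
  · simp [Nat.div_self hn]
  · rw [if_neg hdn, if_neg fun hnd ↦ hdn (Nat.dvd_antisymm hd hnd)]
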